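/- Let F be a finite field and let X ∈ M_n(F) be invertible. Then there exists an invertible alternating matrix B ∈ M_n(F) with X·B·Xᵀ = B if and only if X is similar to X⁻¹ and, for every λ ∈ {1, −1} and every odd m ≥ 1, the multiplicity of (t−λ)^m as an elementary divisor of X is even. -/

import Mathlib

open Matrix

/-- The multiplicity of `(t - λ)^m` as an elementary divisor of `X`, computed as
`2·dim ker((X−λI)^m) − dim ker((X−λI)^{m+1}) − dim ker((X−λI)^{m−1})` (as an integer). -/
noncomputable def edMultiplicity {F : Type*} [Field F] {n : ℕ}
    (X : Matrix (Fin n) (Fin n) F) (lam : F) (m : ℕ) : ℤ :=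
  2 * (Module.finrank F (LinearMap.ker (Matrix.toLin' ((X - lam • 1) ^ m))) : ℤ)
    - (Module.finrank F (LinearMap.ker (Matrix.toLin' ((X - lam • 1) ^ (m + 1)))) : ℤ)
    - (Module.finrank F (LinearMap.ker (Matrix.toLin' ((X - lam • 1) ^ (m - 1)))) : ℤ)

section

open Polynomial

theorem LinearMap.BilinForm.IsAlt.even_finrank_add_finrank_ker {F : Type*} [Field F] {V : Type*}
    [AddCommGroup V] [Module F V] [FiniteDimensional F V] (β : LinearMap.BilinForm F V)
    (hβ : β.IsAlt) :
    Even (Module.finrank F V + Module.finrank F (LinearMap.ker β)) := by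
  induction hn : Module.finrank F V using Nat.strong_induction_on generalizing V with
  | _ n ih =>
  by_cases h0 : β = 0
  · subst h0
    rw [LinearMap.ker_zero, finrank_top, hn]
    exact ⟨n, rfl⟩
  obtain ⟨u, v, huv⟩ : ∃ u v, β u v ≠ 0 := by
    by_contra! h
    exact h0 (LinearMap.ext fun u => LinearMap.ext fun v => h u v)
  have hvu : β v u = -β u v := (hβ.neg_eq u v).symm
  set c := β u v with hc
  let g : V →ₗ[F] F × F := (β u).prod (β v)
  have hg : ∀ x, x ∈ LinearMap.ker g ↔ β u x = 0 ∧ β v x = 0 := by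
    intro x; simp [g]
  have hsurj : Function.Surjective g := by
    rintro ⟨a, b⟩
    refine ⟨(a / c) • v - (b / c) • u, ?_⟩
    simp [g, hvu, hβ u, hβ v, ← hc]
    constructor <;> field_simp
  have hrank := LinearMap.finrank_range_add_finrank_ker g
  rw [LinearMap.range_eq_top.2 hsurj, finrank_top, Module.finrank_prod, Module.finrank_self,
    hn] at hrank
  have key := ih (Module.finrank F (LinearMap.ker g)) (by omega) (V := LinearMap.ker g)
    (β.restrict (LinearMap.ker g)) (fun x => hβ x) rfl
  have hker : (LinearMap.ker (β.restrict (LinearMap.ker g))).map (LinearMap.ker g).subtype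
      = LinearMap.ker β := by
    ext x
    simp only [Submodule.mem_map, LinearMap.mem_ker]
    constructor
    · rintro ⟨⟨y, hy⟩, h, rfl⟩
      ext z
      have hy' := (hg y).1 hy
      have hz1 : z - ((β u z / c) • v - (β v z / c) • u) ∈ LinearMap.ker g := by
        refine (hg _).2 ⟨?_, ?_⟩ <;> simp [hvu, hβ u, hβ v, ← hc] <;> field_simp <;> simp
      have := LinearMap.congr_fun h ⟨_, hz1⟩
      simp only [LinearMap.BilinForm.restrict_apply, LinearMap.domRestrict_apply, map_sub, map_smul,
        ← hβ.neg_eq u y, ← hβ.neg_eq v y, hy'.1, hy'.2] at this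
      simpa [← hβ.neg_eq u y, ← hβ.neg_eq v y, hy'.1, hy'.2] using this
    · intro h
      have hx : x ∈ LinearMap.ker g := (hg x).2
        ⟨by rw [← hβ.neg_eq x u, h]; simp, by rw [← hβ.neg_eq x v, h]; simp⟩
      refine ⟨⟨x, hx⟩, ?_, rfl⟩
      ext z
      simp [h]
  have hker' := LinearEquiv.finrank_eq (Submodule.equivMapOfInjective (LinearMap.ker g).subtype
    (LinearMap.ker g).injective_subtype (LinearMap.ker (β.restrict (LinearMap.ker g))))
  rw [hker] at hker'
  rw [← hker', ← hrank]
  grind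


theorem exists_linearEquiv_pi_adjoinRoot.{u, v} {F : Type u} [Field F] {V : Type v}
    [AddCommGroup V] [Module F V] [FiniteDimensional F V] (f : Module.End F V) :
    ∃ (ι : Type u) (_ : Fintype ι) (p : ι → F[X]) (e : ι → ℕ), (∀ i, Irreducible (p i)) ∧
      ∃ ψ : V ≃ₗ[F] (∀ i, AdjoinRoot (p i ^ e i)),
        ∀ v i, ψ (f v) i = AdjoinRoot.root (p i ^ e i) * ψ v i := by
  obtain ⟨ι, _, p, hp, e, ⟨E⟩⟩ := Module.equiv_directSum_of_isTorsion
    (Module.AEval.isTorsion_of_finiteDimensional F V f)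
  refine ⟨ι, inferInstance, p, e, hp, ?_⟩
  let E' := E.trans (DirectSum.linearEquivFunOnFintype F[X] ι (fun i => F[X] ⧸ F[X] ∙ p i ^ e i))
  let ψ : V ≃ₗ[F] (∀ i, AdjoinRoot (p i ^ e i)) :=
    (Module.AEval'.of f).trans (E'.restrictScalars F)
  refine ⟨ψ, fun v i => ?_⟩
  have h : E' (Module.AEval'.of f (f v)) = (X : F[X]) • E' (Module.AEval'.of f v) := by
    rw [← Module.AEval'.X_smul_of, map_smul]
  have h' : ψ (f v) i = (X : F[X]) • E' (Module.AEval'.of f v) i := congrFun h i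
  obtain ⟨y, hy⟩ := Submodule.Quotient.mk_surjective _ (E' (Module.AEval'.of f v) i)
  have hy' : ψ v i = AdjoinRoot.mk (p i ^ e i) y := hy.symm
  rw [h', hy', ← hy]
  rfl

theorem exists_linearEquiv_pi_adjoinRoot_of_injective.{u, v} {F : Type u} [Field F] {V : Type v}
    [AddCommGroup V] [Module F V] [FiniteDimensional F V] (f : Module.End F V)
    (hf : Function.Injective f) :
    ∃ (ι : Type u) (_ : Fintype ι) (p : ι → F[X]) (e : ι → ℕ),
      (∀ i, Irreducible (p i)) ∧ (∀ i, (p i).coeff 0 ≠ 0) ∧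
      (∀ i, e i = 0 → p i = X - C 1) ∧
      ∃ ψ : V ≃ₗ[F] (∀ i, AdjoinRoot (p i ^ e i)),
        ∀ v i, ψ (f v) i = AdjoinRoot.root (p i ^ e i) * ψ v i := by
  classical
  obtain ⟨ι, _, p, e, hp, ψ, hψ⟩ := exists_linearEquiv_pi_adjoinRoot f
  let p' : ι → F[X] := fun i => if e i = 0 then X - C 1 else p i
  have hp' : ∀ i, p i ^ e i = p' i ^ e i := by
    intro i
    by_cases h : e i = 0 <;> simp [p', h]
  let E : ∀ i, AdjoinRoot (p i ^ e i) ≃ₐ[F] AdjoinRoot (p' i ^ e i) := fun i =>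
    AdjoinRoot.algEquivOfEq F _ _ (hp' i)
  refine ⟨ι, inferInstance, p', e, fun i => ?_, fun i => ?_,
    fun i h => if_pos h,
    ψ.trans (LinearEquiv.piCongrRight fun i => (E i).toLinearEquiv), fun v i => ?_⟩
  · by_cases h : e i = 0
    · simpa [p', h] using irreducible_X_sub_C (1 : F)
    · simpa [p', h] using hp i
  · by_cases h : e i = 0
    · simp [p', h]
    · simp only [p', h, if_false]
      intro h0
      have hass : Associated (X : F[X]) (p i) :=
        irreducible_X.associated_of_dvd (hp i) (X_dvd_iff.2 h0)
      obtain ⟨k, hk⟩ := Nat.exists_eq_succ_of_ne_zero h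
      have hz : f (ψ.symm (Pi.single i (AdjoinRoot.mk _ (p i ^ k)))) = 0 := by
        apply ψ.injective
        ext j
        rw [hψ, ψ.apply_symm_apply, map_zero]
        by_cases hj : j = i
        · subst hj
          rw [Pi.single_eq_same, ← AdjoinRoot.mk_X, ← map_mul, Pi.zero_apply,
            AdjoinRoot.mk_eq_zero, hk, pow_succ']
          exact mul_dvd_mul_right hass.symm.dvd _
        · simp [hj]
      have hz' := hf (hz.trans (map_zero f).symm)
      rw [LinearEquiv.map_eq_zero_iff, Pi.single_eq_zero_iff, AdjoinRoot.mk_eq_zero, hk] at hz'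
      exact absurd ((pow_dvd_pow_iff (hp i).ne_zero (hp i).not_isUnit).1 hz') (by simp)
  · simp only [LinearEquiv.trans_apply, LinearEquiv.piCongrRight_apply, hψ]
    refine (map_mul (E i) _ _).trans ?_
    rw [AdjoinRoot.algEquivOfEq_root]
    rfl

theorem apply_aeval_eq_mk_mul {F : Type*} [Field F] {V : Type*} [AddCommGroup V] [Module F V]
    {f : Module.End F V} {ι : Type*} {q : ι → F[X]} (ψ : V ≃ₗ[F] (∀ i, AdjoinRoot (q i)))
    (hψ : ∀ v i, ψ (f v) i = AdjoinRoot.root (q i) * ψ v i) (g : F[X]) (v : V) (i : ι) :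
    ψ (aeval f g v) i = AdjoinRoot.mk (q i) g * ψ v i := by
  induction g using Polynomial.induction_on' generalizing v with
  | add a b ha hb => simp [ha, hb, add_mul]
  | monomial n c =>
    rw [aeval_monomial, ← C_mul_X_pow_eq_monomial]
    induction n generalizing v with
    | zero => simp [Module.algebraMap_end_apply, Algebra.smul_def]
    | succ n ih =>
      have := ih (f v)
      rw [hψ] at this
      rw [pow_succ, ← mul_assoc, Module.End.mul_apply, this, pow_succ]
      simp [mul_assoc]

theorem finrank_ker_aeval_eq_sum {F : Type*} [Field F] {V : Type*} [AddCommGroup V] [Module F V]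
    [FiniteDimensional F V]
    {f : Module.End F V} {ι : Type*} [Fintype ι] {q : ι → F[X]}
    (ψ : V ≃ₗ[F] (∀ i, AdjoinRoot (q i)))
    (hψ : ∀ v i, ψ (f v) i = AdjoinRoot.root (q i) * ψ v i) (hq : ∀ i, q i ≠ 0) (g : F[X]) :
    Module.finrank F (LinearMap.ker (aeval f g)) =
      ∑ i, Module.finrank F (LinearMap.ker (LinearMap.mulLeft F (AdjoinRoot.mk (q i) g))) := by
  have : ∀ i, FiniteDimensional F (AdjoinRoot (q i)) := fun i =>
    (AdjoinRoot.powerBasis (hq i)).finite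
  rw [← Module.finrank_pi_fintype]
  refine LinearEquiv.finrank_eq
    { toFun := fun v i => ⟨ψ v i, by
        have := v.2
        rw [LinearMap.mem_ker] at this
        rw [LinearMap.mem_ker, LinearMap.mulLeft_apply, ← apply_aeval_eq_mk_mul ψ hψ, this]
        simp⟩
      invFun := fun w => ⟨ψ.symm fun i => w i, by
        rw [LinearMap.mem_ker]
        apply ψ.injective
        ext i
        rw [apply_aeval_eq_mk_mul ψ hψ, ψ.apply_symm_apply, map_zero]
        exact (w i).2⟩
      map_add' := fun v w => by ext i; simp
      map_smul' := fun c v => by ext i; simp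
      left_inv := fun v => by simp
      right_inv := fun w => by simp }

theorem finrank_ker_mulLeft_mk_pow {F : Type*} [Field F] {p g : F[X]} (hp : Irreducible p)
    (hg : Irreducible g) (e m : ℕ) [Decidable (Associated g p)] :
    Module.finrank F (LinearMap.ker (LinearMap.mulLeft F (AdjoinRoot.mk (p ^ e) (g ^ m)))) =
      if Associated g p then g.natDegree * min m e else 0 := by
  have hmem : ∀ h : F[X], AdjoinRoot.mk (p ^ e) h ∈
      LinearMap.ker (LinearMap.mulLeft F (AdjoinRoot.mk (p ^ e) (g ^ m))) ↔
      p ^ e ∣ g ^ m * h := by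
    intro h
    rw [LinearMap.mem_ker, LinearMap.mulLeft_apply, ← map_mul, AdjoinRoot.mk_eq_zero]
  split_ifs with ha
  · let φ : F[X] →ₗ[F] AdjoinRoot (p ^ e) :=
      (LinearMap.mulLeft F (AdjoinRoot.mk (p ^ e) (p ^ (e - m)))).comp
        (AdjoinRoot.mkₐ (p ^ e)).toLinearMap
    have hφ : ∀ h, φ h = AdjoinRoot.mk (p ^ e) (p ^ (e - m) * h) := by
      intro h
      rw [map_mul]; rfl
    have hem : p ^ e = p ^ (e - m) * p ^ min m e := by rw [← pow_add]; congr 1; omega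
    have hrange : LinearMap.range φ =
        LinearMap.ker (LinearMap.mulLeft F (AdjoinRoot.mk (p ^ e) (g ^ m))) := by
      ext x
      obtain ⟨h, rfl⟩ := AdjoinRoot.mk_surjective x
      rw [hmem]
      have h1 : p ^ e ∣ g ^ m * h ↔ p ^ e ∣ p ^ m * h :=
        (Associated.mul_right (ha.pow_pow) h).dvd_iff_dvd_right
      rw [h1]
      constructor
      · rintro ⟨y, hy⟩
        rw [hφ, AdjoinRoot.mk_eq_mk] at hy
        have h2 : p ^ e ∣ p ^ m * (p ^ (e - m) * y) := by
          rw [← mul_assoc, ← pow_add]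
          exact (pow_dvd_pow p (by omega)).mul_right _
        have := dvd_sub h2 (hy.mul_left (p ^ m))
        simpa [mul_sub] using this
      · intro h2
        have : p ^ (e - m) ∣ h := by
          by_cases hme : m ≤ e
          · rw [show e = m + (e - m) by omega, pow_add] at h2
            exact (mul_dvd_mul_iff_left (pow_ne_zero _ hp.ne_zero)).1 (by simpa using h2)
          · rw [show e - m = 0 by omega]; simp
        obtain ⟨y, rfl⟩ := this
        exact ⟨y, hφ y⟩
    have hker : LinearMap.ker φ = (Ideal.span {p ^ min m e}).restrictScalars F := by
      ext h
      rw [LinearMap.mem_ker, hφ, AdjoinRoot.mk_eq_zero, Submodule.restrictScalars_mem,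
        Ideal.mem_span_singleton]
      nth_rw 1 [hem]
      exact mul_dvd_mul_iff_left (pow_ne_zero _ hp.ne_zero)
    rw [← hrange, ← (φ.quotKerEquivRange).finrank_eq, hker]
    refine (finrank_quotient_span_eq_natDegree (f := p ^ min m e)).trans ?_
    rw [natDegree_pow, mul_comm, natDegree_eq_of_degree_eq (degree_eq_degree_of_associated ha)]
  · have : LinearMap.ker (LinearMap.mulLeft F (AdjoinRoot.mk (p ^ e) (g ^ m))) = ⊥ := by
      rw [eq_bot_iff]
      intro x hx
      obtain ⟨h, rfl⟩ := AdjoinRoot.mk_surjective x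
      rw [hmem] at hx
      rw [Submodule.mem_bot, AdjoinRoot.mk_eq_zero]
      refine IsCoprime.dvd_of_dvd_mul_left ?_ hx
      refine IsCoprime.pow ((hp.coprime_iff_not_dvd).2 fun hd => ha ?_)
      exact (hp.associated_of_dvd hg hd).symm
    rw [this, finrank_bot]


theorem exists_mul_eq_mk_pow {F : Type*} [Field F] {p : F[X]} (hp : Irreducible p) {k : ℕ}
    {x : AdjoinRoot (p ^ (k + 1))} (hx : x ≠ 0) :
    ∃ y, x * y = AdjoinRoot.mk (p ^ (k + 1)) (p ^ k) := by
  obtain ⟨g, rfl⟩ := AdjoinRoot.mk_surjective x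
  have hg : ¬ p ^ (k + 1) ∣ g := by rwa [Ne, AdjoinRoot.mk_eq_zero] at hx
  have hg0 : g ≠ 0 := by rintro rfl; simp at hg
  obtain ⟨j, g', rfl, hg'⟩ : ∃ j g', g = p ^ j * g' ∧ ¬ p ∣ g' :=
    ⟨_, (FiniteMultiplicity.of_prime_left hp.prime hg0).exists_eq_pow_mul_and_not_dvd⟩
  have hj : j ≤ k := by
    by_contra! h
    exact hg ((pow_dvd_pow p h).mul_right _)
  obtain ⟨a, b, hab⟩ : IsCoprime g' (p ^ (k + 1)) :=
    (((hp.coprime_iff_not_dvd).2 hg').pow_left).symm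
  refine ⟨AdjoinRoot.mk _ (a * p ^ (k - j)), ?_⟩
  rw [← map_mul, AdjoinRoot.mk_eq_mk]
  refine ⟨-(b * p ^ k), ?_⟩
  have h1 : p ^ k = p ^ j * p ^ (k - j) := by rw [← pow_add]; congr 1; omega
  linear_combination (p ^ k) * hab - g' * a * h1

theorem exists_linearMap_le_ker_separating {F : Type*} [Field F] {p : F[X]} (hp : Irreducible p)
    {k : ℕ} (W : Submodule F (AdjoinRoot (p ^ (k + 1)))) (c : AdjoinRoot (p ^ (k + 1)))
    (hc : AdjoinRoot.mk (p ^ (k + 1)) (p ^ k) * c ∉ W) :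
    ∃ φ : AdjoinRoot (p ^ (k + 1)) →ₗ[F] F, W ≤ LinearMap.ker φ ∧
      ∀ a, (∀ b, φ (a * b) = 0) → a = 0 := by
  obtain ⟨φ, h1, h2⟩ := Submodule.exists_le_ker_of_notMem hc
  refine ⟨φ, h2, fun a ha => ?_⟩
  by_contra h0
  obtain ⟨y, hy⟩ := exists_mul_eq_mk_pow hp h0
  exact h1 (by rw [← hy, mul_assoc]; exact ha _)

theorem exists_linearMap_separating {F : Type*} [Field F] {p : F[X]} (hp : Irreducible p) (e : ℕ) :
    ∃ φ : AdjoinRoot (p ^ e) →ₗ[F] F, ∀ a, (∀ b, φ (a * b) = 0) → a = 0 := by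
  cases e with
  | zero =>
    refine ⟨0, fun a _ => ?_⟩
    obtain ⟨g, rfl⟩ := AdjoinRoot.mk_surjective a
    rw [AdjoinRoot.mk_eq_zero]
    simp
  | succ k =>
    obtain ⟨φ, -, h⟩ := exists_linearMap_le_ker_separating hp (k := k) ⊥ 1 (by
      rw [mul_one, Submodule.mem_bot, AdjoinRoot.mk_eq_zero,
        pow_dvd_pow_iff hp.ne_zero hp.not_isUnit]
      simp)
    exact ⟨φ, h⟩

theorem isUnit_root_of_coeff_zero_ne_zero {F : Type*} [Field F] {q : F[X]} (hq : q.coeff 0 ≠ 0) :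
    IsUnit (AdjoinRoot.root q) := by
  obtain ⟨a, b, hab⟩ : IsCoprime (X : F[X]) q :=
    (irreducible_X.coprime_iff_not_dvd).2 (by rwa [X_dvd_iff])
  refine IsUnit.of_mul_eq_one (AdjoinRoot.mk q a) ?_
  rw [← AdjoinRoot.mk_X, ← map_mul, ← map_one (AdjoinRoot.mk q), AdjoinRoot.mk_eq_mk]
  exact ⟨-b, by linear_combination hab⟩

theorem exists_algHom_root_mul_eq_one {F : Type*} [Field F] {q q' : F[X]} (hq : q.coeff 0 ≠ 0)
    (h : q.reverse ∣ q') :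
    ∃ θ : AdjoinRoot q' →ₐ[F] AdjoinRoot q, θ (AdjoinRoot.root q') * AdjoinRoot.root q = 1 := by
  have hu := isUnit_root_of_coeff_zero_ne_zero hq
  let := hu.invertible
  have h1 : eval₂ (algebraMap F (AdjoinRoot q)) (⅟(AdjoinRoot.root q)) q.reverse = 0 := by
    have := eval₂_reverse_mul_pow (algebraMap F (AdjoinRoot q)) (AdjoinRoot.root q) q
    rw [← aeval_def (AdjoinRoot.root q) q, AdjoinRoot.aeval_eq, AdjoinRoot.mk_self] at this
    exact (hu.pow _).mul_left_eq_zero.1 this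
  refine ⟨AdjoinRoot.liftAlgHom q' (Algebra.ofId F _) (⅟(AdjoinRoot.root q)) ?_, ?_⟩
  · obtain ⟨r, rfl⟩ := h
    have := congrArg (· * eval₂ (algebraMap F (AdjoinRoot q)) (⅟(AdjoinRoot.root q)) r) h1
    simpa [eval₂_mul] using this
  · rw [AdjoinRoot.liftAlgHom_root, invOf_mul_self]

theorem exists_algEquiv_root_mul_eq_one {F : Type*} [Field F] {q q' : F[X]} (hq : q.coeff 0 ≠ 0)
    (hq' : q'.coeff 0 ≠ 0) (h : q.reverse ∣ q') (h' : q'.reverse ∣ q) :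
    ∃ θ : AdjoinRoot q' ≃ₐ[F] AdjoinRoot q, θ (AdjoinRoot.root q') * AdjoinRoot.root q = 1 := by
  obtain ⟨θ, hθ⟩ := exists_algHom_root_mul_eq_one hq h
  obtain ⟨η, hη⟩ := exists_algHom_root_mul_eq_one hq' h'
  refine ⟨AlgEquiv.ofAlgHom θ η (AdjoinRoot.algHom_ext ?_) (AdjoinRoot.algHom_ext ?_), hθ⟩
  · have := congrArg θ hη
    rw [map_mul, map_one] at this
    exact left_inv_eq_right_inv this (by rwa [mul_comm] at hθ ⊢)
  · have := congrArg η hθ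
    rw [map_mul, map_one] at this
    exact left_inv_eq_right_inv this (by rwa [mul_comm] at hη ⊢)

/-- The `F`-bilinear pairing `(a, b) ↦ φ (a * θ b)`. -/
noncomputable def twistedTracePairing {F A B : Type*} [Field F] [CommRing A] [CommRing B]
    [Algebra F A] [Algebra F B] (φ : A →ₗ[F] F) (θ : B ≃ₐ[F] A) : A →ₗ[F] B →ₗ[F] F :=
  ((LinearMap.mul F A).compr₂ φ).compl₂ θ.toLinearMap

theorem twistedTracePairing_apply {F A B : Type*} [Field F] [CommRing A] [CommRing B]
    [Algebra F A] [Algebra F B] (φ : A →ₗ[F] F) (θ : B ≃ₐ[F] A) (a : A) (b : B) :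
    twistedTracePairing φ θ a b = φ (a * θ b) := rfl

theorem twistedTracePairing_separatingLeft {F A B : Type*} [Field F] [CommRing A] [CommRing B]
    [Algebra F A] [Algebra F B] {φ : A →ₗ[F] F} (hφ : ∀ a, (∀ b, φ (a * b) = 0) → a = 0)
    (θ : B ≃ₐ[F] A) (a : A) (ha : ∀ b, twistedTracePairing φ θ a b = 0) : a = 0 :=
  hφ a fun b => by simpa [twistedTracePairing_apply] using ha (θ.symm b)

theorem twistedTracePairing_separatingRight {F A B : Type*} [Field F] [CommRing A] [CommRing B]
    [Algebra F A] [Algebra F B] {φ : A →ₗ[F] F} (hφ : ∀ a, (∀ b, φ (a * b) = 0) → a = 0)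
    (θ : B ≃ₐ[F] A) (b : B) (hb : ∀ a, twistedTracePairing φ θ a b = 0) : b = 0 := by
  have := hφ (θ b) fun a => by simpa [twistedTracePairing_apply, mul_comm] using hb a
  simpa using this

theorem twistedTracePairing_mul_mul {F A B : Type*} [Field F] [CommRing A] [CommRing B]
    [Algebra F A] [Algebra F B] (φ : A →ₗ[F] F) (θ : B ≃ₐ[F] A) {x : A} {y : B}
    (h : θ y * x = 1) (a : A) (b : B) :
    twistedTracePairing φ θ (x * a) (y * b) = twistedTracePairing φ θ a b := by
  simp only [twistedTracePairing_apply, map_mul]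
  congr 1
  linear_combination (a * θ b) * h

section Involution

variable {F A : Type*} [Field F] [CommRing A] [Algebra F A] {θ : A ≃ₐ[F] A} {x : A}

theorem apply_eq_self_of_mem_adjoin_add_apply (hx : θ x * x = 1) {r : A}
    (hr : r ∈ Algebra.adjoin F {x + θ x}) : θ r = r := by
  have hxx : θ (θ x) = x := by
    have := congrArg θ hx
    rw [map_mul, map_one] at this
    exact left_inv_eq_right_inv this hx
  induction hr using Algebra.adjoin_induction with
  | mem y hy =>
    rw [Set.mem_singleton_iff.1 hy, map_add, hxx, add_comm]
  | algebraMap c => simp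
  | add a b _ _ ha hb => rw [map_add, ha, hb]
  | mul a b _ _ ha hb => rw [map_mul, ha, hb]

theorem mul_apply_mem_adjoin_add_apply (hx : θ x * x = 1) {a : A}
    (ha : a ∈ (aeval (R := F) x).range) : a * θ a ∈ Algebra.adjoin F {x + θ x} := by
  set u := x + θ x with hu
  have huR : u ∈ Algebra.adjoin F {u} := Algebra.self_mem_adjoin_singleton F u
  have hdec : ∃ r ∈ Algebra.adjoin F {u}, ∃ s ∈ Algebra.adjoin F {u}, a = r + s * x := by
    obtain ⟨g, rfl⟩ := ha
    change ∃ r ∈ _, ∃ s ∈ _, aeval x g = _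
    induction g using Polynomial.induction_on' with
    | add g h hg hh =>
      obtain ⟨r, hr, s, hs, e1⟩ := hg
      obtain ⟨r', hr', s', hs', e2⟩ := hh
      exact ⟨r + r', add_mem hr hr', s + s', add_mem hs hs', by rw [map_add, e1, e2]; ring⟩
    | monomial n c =>
      induction n with
      | zero => exact ⟨algebraMap F A c, Subalgebra.algebraMap_mem _ c, 0, zero_mem _, by simp⟩
      | succ n ih =>
        obtain ⟨r, hr, s, hs, e1⟩ := ih
        refine ⟨-s, neg_mem hs, r + s * u, add_mem hr (mul_mem hs huR), ?_⟩
        rw [← monomial_mul_X, map_mul, e1, aeval_X, hu]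
        linear_combination (-s) * hx
  obtain ⟨r, hr, s, hs, rfl⟩ := hdec
  have : (r + s * x) * θ (r + s * x) = r * r + s * s + r * s * u := by
    rw [map_add, map_mul, apply_eq_self_of_mem_adjoin_add_apply hx hr,
      apply_eq_self_of_mem_adjoin_add_apply hx hs, hu]
    linear_combination (s * s) * hx
  rw [this]
  exact add_mem (add_mem (mul_mem hr hr) (mul_mem hs hs)) (mul_mem (mul_mem hr hs) huR)

theorem notMem_adjoin_add_apply_of_pow {lam : F} (hlam : lam * lam = 1) (hx : θ x * x = 1)
    {k : ℕ} (hk : Odd k) (h1 : (x - algebraMap F A lam) ^ (k + 1) = 0)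
    (h2 : (x - algebraMap F A lam) ^ k ≠ 0) {c : A}
    (hc : IsUnit c) : c * (x - algebraMap F A lam) ^ k ∉ Algebra.adjoin F {x + θ x} := by
  intro hmem
  set y := x - algebraMap F A lam with hy
  have hl : algebraMap F A lam * algebraMap F A lam = 1 := by rw [← map_mul, hlam, map_one]
  have hux : IsUnit (θ x) := IsUnit.of_mul_eq_one x hx
  have hw : x + θ x - algebraMap F A (2 * lam) = θ x * y ^ 2 := by
    rw [hy, map_mul, map_ofNat]
    linear_combination (2 * algebraMap F A lam - x) * hx - θ x * hl
  obtain ⟨g, hg⟩ : ∃ g : F[X], aeval (θ x * y ^ 2) g = c * y ^ k := by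
    rw [Algebra.adjoin_singleton_eq_range_aeval] at hmem
    obtain ⟨g, hg⟩ := hmem
    change aeval (x + θ x) g = _ at hg
    refine ⟨g.comp (X + C (2 * lam)), ?_⟩
    rw [aeval_comp, ← hg, ← hw]
    congr 1
    simp
  have hzero : ∀ n, k + 1 ≤ n → y ^ n = 0 := fun n hn => by
    rw [← Nat.sub_add_cancel hn, pow_add, h1, mul_zero]
  have hne : c * y ^ k ≠ 0 := fun h => h2 (hc.mul_right_eq_zero.1 h)
  have hg0 : g ≠ 0 := by
    rintro rfl
    exact hne (by rw [← hg, map_zero])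
  obtain ⟨j, h, rfl, hh⟩ : ∃ j h, g = X ^ j * h ∧ ¬ X ∣ h :=
    ⟨_, (FiniteMultiplicity.of_prime_left (prime_X (R := F)) hg0).exists_eq_pow_mul_and_not_dvd⟩
  have hunit : IsUnit (aeval (θ x * y ^ 2) h) := by
    have hnil : IsNilpotent (aeval (θ x * y ^ 2) (divX h) * (θ x * y ^ 2)) :=
      ⟨k + 1, by rw [mul_pow, mul_pow, ← pow_mul, hzero (2 * (k + 1)) (by omega)]; simp⟩
    have h0 : IsUnit (algebraMap F A (h.coeff 0)) :=
      (IsUnit.mk0 _ (by rwa [X_dvd_iff] at hh)).map _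
    have := hnil.isUnit_add_left_of_commute h0 (Commute.all _ _)
    rw [← divX_mul_X_add h]
    simpa [add_comm] using this
  rw [map_mul, map_pow, aeval_X, mul_pow, ← pow_mul] at hg
  have hyj : y ^ (2 * j + 1) = 0 := by
    have h3 : (θ x ^ j * aeval (θ x * y ^ 2) h) * y ^ (2 * j + 1) = 0 := by
      have : c * y ^ k * y = 0 := by rw [mul_assoc, ← pow_succ, h1, mul_zero]
      rw [← this, ← hg]; ring
    exact ((hux.pow j).mul hunit).mul_right_eq_zero.1 h3
  have hjk : k ≤ 2 * j := by
    by_contra! hlt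
    exact h2 (by rw [show k = 2 * j + 1 + (k - (2 * j + 1)) by omega, pow_add, hyj, zero_mul])
  obtain ⟨i, rfl⟩ := hk
  rw [hzero (2 * j) (by omega)] at hg
  exact hne (by rw [← hg]; ring)

end Involution

theorem exists_isAlt_form_adjoinRoot {F : Type*} [Field F] {p : F[X]} (hp : Irreducible p)
    (hp0 : p.coeff 0 ≠ 0) (hrev : Associated p p.reverse) {e : ℕ}
    (he : (Associated p (X - C 1) ∨ Associated p (X - C (-1))) → Even e) :
    ∃ β : LinearMap.BilinForm F (AdjoinRoot (p ^ e)), β.IsAlt ∧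
      (∀ a b, β (AdjoinRoot.root _ * a) (AdjoinRoot.root _ * b) = β a b) ∧
      ∀ a, (∀ b, β a b = 0) → a = 0 := by
  cases e with
  | zero =>
    refine ⟨0, fun a => rfl, fun a b => rfl, fun a _ => ?_⟩
    obtain ⟨g, rfl⟩ := AdjoinRoot.mk_surjective a
    rw [AdjoinRoot.mk_eq_zero]
    simp
  | succ k =>
    have hq0 : (p ^ (k + 1)).coeff 0 ≠ 0 := by
      rw [coeff_zero_eq_eval_zero, eval_pow, ← coeff_zero_eq_eval_zero]
      exact pow_ne_zero _ hp0
    have hrq : (p ^ (k + 1)).reverse ∣ p ^ (k + 1) := by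
      have : ∀ n, (p ^ n).reverse = p.reverse ^ n := fun n => by
        induction n with
        | zero => simpa using reverse_C (1 : F)
        | succ n ih => rw [pow_succ, reverse_mul_of_domain, ih, pow_succ]
      rw [this]
      exact hrev.symm.pow_pow.dvd
    obtain ⟨θ, hθ⟩ := exists_algEquiv_root_mul_eq_one hq0 hq0 hrq hrq
    set x := AdjoinRoot.root (p ^ (k + 1)) with hx
    have hs0 : AdjoinRoot.mk (p ^ (k + 1)) (p ^ k) ≠ 0 := by
      rw [Ne, AdjoinRoot.mk_eq_zero, pow_dvd_pow_iff hp.ne_zero hp.not_isUnit]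
      simp
    obtain ⟨c, hc⟩ : ∃ c, AdjoinRoot.mk (p ^ (k + 1)) (p ^ k) * c ∉
        Subalgebra.toSubmodule (Algebra.adjoin F {x + θ x}) := by
      by_contra! hall
      have hs := apply_eq_self_of_mem_adjoin_add_apply hθ (hall 1)
      have hsx := apply_eq_self_of_mem_adjoin_add_apply hθ (hall x)
      rw [mul_one] at hs
      rw [map_mul, hs] at hsx
      have hdvd : p ∣ (X - C 1) * (X - C (-1)) := by
        have : AdjoinRoot.mk (p ^ (k + 1)) (p ^ k * ((X - C 1) * (X - C (-1)))) = 0 := by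
          simp only [map_mul, map_sub, AdjoinRoot.mk_X, map_neg, map_one, ← hx] at hsx ⊢
          linear_combination (-x) * hsx + (AdjoinRoot.mk (p ^ (k + 1))) (p ^ k) * hθ
        rw [AdjoinRoot.mk_eq_zero, pow_succ] at this
        exact (mul_dvd_mul_iff_left (pow_ne_zero _ hp.ne_zero)).1 this
      obtain ⟨lam, hlam, hass⟩ : ∃ lam : F, lam * lam = 1 ∧ Associated p (X - C lam) := by
        rcases hp.prime.dvd_or_dvd hdvd with h | h
        · exact ⟨1, by simp, hp.associated_of_dvd (irreducible_X_sub_C _) h⟩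
        · exact ⟨-1, by simp, hp.associated_of_dvd (irreducible_X_sub_C _) h⟩
      have hk : Odd k := by
        have : Even (k + 1) := he (by
          rcases mul_self_eq_one_iff.1 hlam with rfl | rfl
          · exact Or.inl hass
          · exact Or.inr hass)
        grind
      have hpow : ∀ n, AdjoinRoot.mk (p ^ (k + 1)) ((X - C lam) ^ n) =
          (x - algebraMap F _ lam) ^ n := fun n => by
        rw [map_pow, map_sub, AdjoinRoot.mk_X]; rfl
      have hdv : ∀ n, (x - algebraMap F _ lam) ^ n = 0 ↔ k + 1 ≤ n := fun n => by
        rw [← hpow, AdjoinRoot.mk_eq_zero, ← (hass.pow_pow (n := n)).dvd_iff_dvd_right,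
          pow_dvd_pow_iff hp.ne_zero hp.not_isUnit]
      obtain ⟨v, hv⟩ := (hass.pow_pow (n := k)).symm
      refine notMem_adjoin_add_apply_of_pow hlam hθ hk ((hdv _).2 le_rfl)
        (fun h => by simpa using (hdv _).1 h) (c := AdjoinRoot.mk _ v) (v.isUnit.map _) ?_
      have := hall 1
      rw [mul_one, ← hv, mul_comm, map_mul, hpow] at this
      exact this
    obtain ⟨φ, hφ1, hφ2⟩ := exists_linearMap_le_ker_separating hp _ c hc
    refine ⟨twistedTracePairing φ θ, fun a => ?_, twistedTracePairing_mul_mul φ θ hθ,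
      twistedTracePairing_separatingLeft hφ2 θ⟩
    refine hφ1 (mul_apply_mem_adjoin_add_apply hθ ?_)
    obtain ⟨g, rfl⟩ := AdjoinRoot.mk_surjective a
    exact ⟨g, AdjoinRoot.aeval_eq g⟩
theorem Finset.pairing_induction {ι K : Type*} [DecidableEq ι] [DecidableEq K]
    (k : ι → K) (τ : K → K) (hτ : ∀ i, τ (τ (k i)) = k i) (Bad : K → Prop)
    (hBad : ∀ i, Bad (k i) → τ (k i) = k i) {Q : Finset ι → Prop}
    (empty : Q ∅)
    (single : ∀ a s, a ∉ s → τ (k a) = k a → ¬ Bad (k a) → Q s → Q (insert a s))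
    (pair : ∀ a b s, a ∉ s → b ∉ s → a ≠ b → k b = τ (k a) → Q s → Q (insert a (insert b s)))
    (s : Finset ι)
    (hcard : ∀ j, (s.filter fun i => k i = k j).card = (s.filter fun i => k i = τ (k j)).card)
    (heven : ∀ j, Bad (k j) → Even (s.filter fun i => k i = k j).card) : Q s := by
  induction hn : s.card using Nat.strong_induction_on generalizing s with
  | _ n ih =>
  rcases s.eq_empty_or_nonempty with rfl | ⟨a, ha⟩
  · exact empty
  have hinj : ∀ i j, τ (k i) = τ (k j) → k i = k j := fun i j h => by
    rw [← hτ i, h, hτ]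
  by_cases hgood : τ (k a) = k a ∧ ¬ Bad (k a)
  · obtain ⟨t, hat, rfl⟩ : ∃ t, a ∉ t ∧ s = insert a t :=
      ⟨s.erase a, Finset.notMem_erase _ _, (Finset.insert_erase ha).symm⟩
    refine single a t hat hgood.1 hgood.2 (ih _ ?_ t ?_ ?_ rfl)
    · rw [← hn, Finset.card_insert_of_notMem hat]; omega
    · intro j
      have := hcard j
      have h1 : k a = k j ↔ k a = τ (k j) := by
        constructor
        · intro h; rw [← h, hgood.1]
        · intro h; rw [← hτ j, ← h, hgood.1]
      rw [Finset.filter_insert, Finset.filter_insert] at this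
      by_cases h : k a = k j
      · rw [if_pos h, if_pos (h1.1 h), Finset.card_insert_of_notMem (by simp [hat]),
          Finset.card_insert_of_notMem (by simp [hat])] at this
        omega
      · rwa [if_neg h, if_neg (mt h1.2 h)] at this
    · intro j hj
      have := heven j hj
      rwa [Finset.filter_insert, if_neg (fun h => hgood.2 (by rwa [h]))] at this
  · obtain ⟨b, hb, hab, hkb⟩ : ∃ b ∈ s, a ≠ b ∧ k b = τ (k a) := by
      have hpos : 0 < (s.filter fun i => k i = k a).card :=
        Finset.card_pos.2 ⟨a, by simp [ha]⟩
      by_cases hta : τ (k a) = k a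
      · have hbad : Bad (k a) := by
          by_contra h
          exact hgood ⟨hta, h⟩
        obtain ⟨b, hb, hba⟩ := Finset.exists_mem_ne (s := s.filter fun i => k i = k a) (by
          obtain ⟨r, hr⟩ := heven a hbad
          omega) a
        rw [Finset.mem_filter] at hb
        exact ⟨b, hb.1, hba.symm, by rw [hb.2, hta]⟩
      · rw [hcard a] at hpos
        obtain ⟨b, hb⟩ := Finset.card_pos.1 hpos
        rw [Finset.mem_filter] at hb
        exact ⟨b, hb.1, fun h => hta (by rw [← hb.2, h]), hb.2⟩
    obtain ⟨t, hat, hbt, rfl⟩ : ∃ t, a ∉ t ∧ b ∉ t ∧ s = insert a (insert b t) :=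
      ⟨(s.erase a).erase b, by simp, by simp, by
        rw [Finset.insert_erase (by simp [hb, hab.symm]), Finset.insert_erase ha]⟩
    have hcount : ∀ κ, ((insert a (insert b t)).filter fun i => k i = κ).card =
        (t.filter fun i => k i = κ).card + (if k a = κ then 1 else 0) +
          (if k b = κ then 1 else 0) := by
      intro κ
      rw [Finset.filter_insert, Finset.filter_insert]
      split_ifs <;> simp [Finset.card_insert_of_notMem, hat, hbt, hab]
    have h1 : ∀ j, k a = k j ↔ k b = τ (k j) := fun j => by
      rw [hkb]
      exact ⟨fun h => by rw [h], hinj _ _⟩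
    have h2 : ∀ j, k b = k j ↔ k a = τ (k j) := fun j => by
      rw [hkb]
      exact ⟨fun h => by rw [← h, hτ], fun h => by rw [h, hτ]⟩
    refine pair a b t hat hbt hab hkb (ih _ ?_ t ?_ ?_ rfl)
    · rw [← hn, Finset.card_insert_of_notMem (by simp [hab, hat]),
        Finset.card_insert_of_notMem hbt]; omega
    · intro j
      have := hcard j
      rw [hcount, hcount] at this
      simp only [h1 j, ← h2 j] at this
      omega
    · intro j hj
      have := heven j hj
      rw [hcount] at this
      have h3 := h1 j
      rw [hBad j hj] at h3
      by_cases h : k a = k j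
      · rw [if_pos h, if_pos (h3.1 h)] at this
        grind
      · rwa [if_neg h, if_neg (mt h3.2 h)] at this

/-- The form `β` on `∀ i, M i` is alternating, invariant under `T`, and its radical consists of
the vectors vanishing on `s`. -/
def IsAltFormOn {F ι : Type*} [Field F] {M : ι → Type*} [∀ i, AddCommGroup (M i)]
    [∀ i, Module F (M i)] (T : ∀ i, M i → M i) (s : Finset ι)
    (β : LinearMap.BilinForm F (∀ i, M i)) : Prop :=
  β.IsAlt ∧ (∀ v w, β (fun i => T i (v i)) (fun i => T i (w i)) = β v w) ∧
    ∀ v, (∀ w, β v w = 0) ↔ ∀ i ∈ s, v i = 0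

section IsAltFormOn

variable {F ι : Type*} [Field F] {M : ι → Type*} [∀ i, AddCommGroup (M i)]
    [∀ i, Module F (M i)] {T : ∀ i, M i → M i}

theorem IsAltFormOn.union [DecidableEq ι] {s t : Finset ι} (hst : Disjoint s t)
    {β γ : LinearMap.BilinForm F (∀ i, M i)} (hβ : IsAltFormOn T s β) (hγ : IsAltFormOn T t γ) :
    IsAltFormOn T (s ∪ t) (β + γ) := by
  have key : ∀ {s t : Finset ι} {β γ : LinearMap.BilinForm F (∀ i, M i)}, Disjoint s t →
      IsAltFormOn T s β → IsAltFormOn T t γ → ∀ v, (∀ w, (β + γ) v w = 0) → ∀ w, β v w = 0 := by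
    intro s t β γ hst hβ hγ v h w
    have h1 := h (s.piecewise w 0)
    have h2 : γ v (s.piecewise w 0) = 0 := by
      rw [← hγ.1.neg_eq, (hγ.2.2 _).2 (fun i hi => ?_), neg_zero]
      rw [Finset.piecewise_eq_of_notMem _ _ _ (Finset.disjoint_right.1 hst hi), Pi.zero_apply]
    have h3 : β v (w - s.piecewise w 0) = 0 := by
      rw [← hβ.1.neg_eq, (hβ.2.2 _).2 (fun i hi => ?_), neg_zero]
      rw [Pi.sub_apply, Finset.piecewise_eq_of_mem _ _ _ hi, sub_self]
    rw [LinearMap.add_apply, LinearMap.add_apply, h2, add_zero] at h1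
    rwa [map_sub, h1, sub_zero] at h3
  refine ⟨hβ.1.add hγ.1, fun v w => ?_, fun v => ⟨fun h i hi => ?_, fun h w => ?_⟩⟩
  · simp only [LinearMap.add_apply, hβ.2.1, hγ.2.1]
  · rcases Finset.mem_union.1 hi with hi | hi
    · exact (hβ.2.2 v).1 (key hst hβ hγ v h) i hi
    · exact (hγ.2.2 v).1 (key hst.symm hγ hβ v (by rwa [add_comm])) i hi
  · rw [LinearMap.add_apply, LinearMap.add_apply,
      (hβ.2.2 v).2 (fun i hi => h i (Finset.mem_union_left _ hi)),
      (hγ.2.2 v).2 (fun i hi => h i (Finset.mem_union_right _ hi)), add_zero]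

theorem exists_isAltFormOn_singleton [DecidableEq ι] {a : ι} {β : LinearMap.BilinForm F (M a)}
    (h1 : β.IsAlt)
    (h2 : ∀ x y, β (T a x) (T a y) = β x y) (h3 : ∀ x, (∀ y, β x y = 0) → x = 0) :
    ∃ γ : LinearMap.BilinForm F (∀ i, M i), IsAltFormOn T {a} γ := by
  refine ⟨β.compl₁₂ (LinearMap.proj a) (LinearMap.proj a), fun v => h1 _, fun v w => h2 _ _,
    fun v => ⟨fun h i hi => ?_, fun h w => ?_⟩⟩
  · rw [Finset.mem_singleton] at hi
    subst hi
    exact h3 _ fun y => by simpa using h (Pi.single i y)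
  · simp [h a (Finset.mem_singleton_self a)]

theorem exists_isAltFormOn_pair [DecidableEq ι] {a b : ι} (hab : a ≠ b)
    {γ : M a →ₗ[F] M b →ₗ[F] F}
    (h1 : ∀ x y, γ (T a x) (T b y) = γ x y) (h2 : ∀ x, (∀ y, γ x y = 0) → x = 0)
    (h3 : ∀ y, (∀ x, γ x y = 0) → y = 0) :
    ∃ β : LinearMap.BilinForm F (∀ i, M i), IsAltFormOn T {a, b} β := by
  let δ : LinearMap.BilinForm F (∀ i, M i) := γ.compl₁₂ (LinearMap.proj a) (LinearMap.proj b)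
  have hδ : ∀ v w, (δ - δ.flip) v w = γ (v a) (w b) - γ (w a) (v b) := fun v w => rfl
  refine ⟨δ - δ.flip, fun v => by rw [hδ, sub_self], fun v w => by simp only [hδ, h1],
    fun v => ⟨fun h => ?_, fun h w => ?_⟩⟩
  · have ha : v a = 0 := h2 _ fun y => by
      have := h (Pi.single b y)
      rwa [hδ, Pi.single_eq_same, Pi.single_eq_of_ne hab, map_zero, LinearMap.zero_apply,
        sub_zero] at this
    have hb : v b = 0 := h3 _ fun x => by
      have := h (Pi.single a x)
      rwa [hδ, Pi.single_eq_same, Pi.single_eq_of_ne hab.symm, map_zero, zero_sub,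
        neg_eq_zero] at this
    simp [ha, hb]
  · rw [hδ, h a (by simp), h b (by simp)]; simp

end IsAltFormOn
theorem Polynomial.reverse_pow_of_domain {F : Type*} [Field F] (p : F[X]) (n : ℕ) :
    (p ^ n).reverse = p.reverse ^ n := by
  induction n with
  | zero => simpa using reverse_C (1 : F)
  | succ n ih => rw [pow_succ, reverse_mul_of_domain, ih, pow_succ]

theorem Polynomial.natTrailingDegree_eq_zero_of_coeff_zero_ne_zero {F : Type*} [Field F] {p : F[X]}
    (hp : p.coeff 0 ≠ 0) : p.natTrailingDegree = 0 :=
  Nat.le_zero.1 (natTrailingDegree_le_of_ne_zero hp)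

theorem Polynomial.natDegree_reverse_of_coeff_zero_ne_zero {F : Type*} [Field F] {p : F[X]}
    (hp : p.coeff 0 ≠ 0) : p.reverse.natDegree = p.natDegree := by
  rw [reverse_natDegree, natTrailingDegree_eq_zero_of_coeff_zero_ne_zero hp, Nat.sub_zero]

theorem Polynomial.reverse_reverse_of_coeff_zero_ne_zero {F : Type*} [Field F] {p : F[X]}
    (hp : p.coeff 0 ≠ 0) : p.reverse.reverse = p := by
  ext n
  rw [coeff_reverse, coeff_reverse, natDegree_reverse_of_coeff_zero_ne_zero hp, revAt_invol]

theorem Polynomial.coeff_zero_reverse_ne_zero {F : Type*} [Field F] {p : F[X]} (hp : p ≠ 0) :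
    p.reverse.coeff 0 ≠ 0 := by
  rwa [coeff_zero_reverse, Ne, leadingCoeff_eq_zero]

theorem Polynomial.irreducible_reverse_of_coeff_zero_ne_zero {F : Type*} [Field F] {p : F[X]}
    (hp : Irreducible p) (hp0 : p.coeff 0 ≠ 0) : Irreducible p.reverse := by
  have hdeg : ∀ q : F[X], q.coeff 0 ≠ 0 → IsUnit q.reverse → IsUnit q := by
    intro q hq hu
    have h := natDegree_eq_zero_of_isUnit hu
    rw [natDegree_reverse_of_coeff_zero_ne_zero hq] at h
    rw [eq_C_of_natDegree_eq_zero h]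
    exact (IsUnit.mk0 _ hq).map C
  have hr0 := coeff_zero_reverse_ne_zero hp.ne_zero
  refine ⟨fun h => hp.not_isUnit (hdeg p hp0 h), fun a b hab => ?_⟩
  have hab0 : a.coeff 0 ≠ 0 ∧ b.coeff 0 ≠ 0 := by
    rw [hab, mul_coeff_zero] at hr0
    exact ⟨left_ne_zero_of_mul hr0, right_ne_zero_of_mul hr0⟩
  have hp' : p = a.reverse * b.reverse := by
    rw [← reverse_mul_of_domain, ← hab, reverse_reverse_of_coeff_zero_ne_zero hp0]
  exact (hp.isUnit_or_isUnit hp').imp (hdeg a hab0.1) (hdeg b hab0.2)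

theorem Associated.reverse {F : Type*} [Field F] {p q : F[X]} (h : Associated p q) :
    Associated p.reverse q.reverse := by
  obtain ⟨u, rfl⟩ := h
  obtain ⟨c, hc, hcu⟩ := Polynomial.isUnit_iff.1 u.isUnit
  rw [reverse_mul_of_domain, ← hcu, reverse_C]
  exact (associated_mul_unit_right _ _ (hc.map C))

theorem Polynomial.associated_reverse_X_sub_C {F : Type*} [Field F] {lam : F}
    (hlam : lam = 1 ∨ lam = -1) : Associated (X - C lam).reverse (X - C lam) := by
  have hl : lam * lam = 1 := by rcases hlam with rfl | rfl <;> simp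
  have h0 : lam ≠ 0 := left_ne_zero_of_mul_eq_one hl
  have : (X - C lam).reverse = (X - C lam) * C (-lam) := by
    have h1 : (X - C lam : F[X]).natDegree = 1 := natDegree_X_sub_C lam
    have h2 : (X - C lam) * C (-lam) = C (-lam) * X + C 1 := by
      rw [← hl]; simp only [C_neg, C_mul]; ring
    rw [h2]
    ext n
    rw [coeff_reverse, h1]
    rcases n with _ | _ | n
    · simp [revAt_le, coeff_one, coeff_X]
    · simp [revAt_le, coeff_one, coeff_X]
    · rw [revAt_eq_self_of_lt (by omega)]
      simp [coeff_X, coeff_one]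
  rw [this]
  exact (associated_mul_unit_right _ _ ((IsUnit.mk0 (-lam) (neg_ne_zero.2 h0)).map C)).symm

theorem finrank_ker_aeval_pow_second_difference {F : Type*} [Field F] {V : Type*} [AddCommGroup V]
    [Module F V] [FiniteDimensional F V] {f : Module.End F V} {ι : Type*} [Fintype ι]
    {p : ι → F[X]} {e : ι → ℕ} (hp : ∀ i, Irreducible (p i))
    (ψ : V ≃ₗ[F] (∀ i, AdjoinRoot (p i ^ e i)))
    (hψ : ∀ v i, ψ (f v) i = AdjoinRoot.root (p i ^ e i) * ψ v i) {g : F[X]} (hg : Irreducible g)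
    {m : ℕ} (hm : 1 ≤ m) [DecidablePred fun i => Associated g (p i) ∧ e i = m] :
    2 * (Module.finrank F (LinearMap.ker (aeval f (g ^ m))) : ℤ)
      - Module.finrank F (LinearMap.ker (aeval f (g ^ (m + 1))))
      - Module.finrank F (LinearMap.ker (aeval f (g ^ (m - 1)))) =
    g.natDegree * (Finset.univ.filter fun i => Associated g (p i) ∧ e i = m).card := by
  classical
  have h := finrank_ker_aeval_eq_sum ψ hψ fun i => pow_ne_zero _ (hp i).ne_zero
  simp only [h, finrank_ker_mulLeft_mk_pow (hp _) hg, Finset.card_filter, Nat.cast_sum,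
    Finset.mul_sum, ← Finset.sum_sub_distrib]
  refine Finset.sum_congr rfl fun i _ => ?_
  by_cases ha : Associated g (p i)
  · simp only [ha, if_true, true_and]
    rcases lt_trichotomy (e i) m with hlt | heq | hgt
    · rw [if_neg hlt.ne, min_eq_right (by omega), min_eq_right (by omega), min_eq_right (by omega)]
      push_cast; ring
    · subst heq
      rw [if_pos rfl, min_eq_right le_rfl, min_eq_right (by omega), min_eq_left (by omega)]
      push_cast [hm]; ring
    · rw [if_neg hgt.ne', min_eq_left (by omega), min_eq_left (by omega), min_eq_left (by omega)]
      push_cast [hm]; ring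
  · simp [ha]

theorem exists_isAltFormOn_univ_adjoinRoot {F : Type*} [Field F] {ι : Type*} [Fintype ι]
    {p : ι → F[X]} {e : ι → ℕ} (hp : ∀ i, Irreducible (p i)) (hp0 : ∀ i, (p i).coeff 0 ≠ 0)
    [∀ g m, DecidablePred fun i => Associated g (p i) ∧ e i = m]
    (hcard : ∀ j, (Finset.univ.filter fun i => Associated (p j) (p i) ∧ e i = e j).card =
      (Finset.univ.filter fun i => Associated (p j).reverse (p i) ∧ e i = e j).card)
    (heven : ∀ lam : F, (lam = 1 ∨ lam = -1) → ∀ m, Odd m →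
      Even (Finset.univ.filter fun i => Associated (X - C lam) (p i) ∧ e i = m).card) :
    ∃ β : LinearMap.BilinForm F (∀ i, AdjoinRoot (p i ^ e i)),
      IsAltFormOn (fun i a => AdjoinRoot.root (p i ^ e i) * a) Finset.univ β := by
  classical
  let k : ι → F[X] × ℕ := fun i => (normalize (p i), e i)
  let τ : F[X] × ℕ → F[X] × ℕ := fun κ => (normalize κ.1.reverse, κ.2)
  let Bad : F[X] × ℕ → Prop := fun κ =>
    ∃ lam : F, (lam = 1 ∨ lam = -1) ∧ Associated (X - C lam) κ.1 ∧ Odd κ.2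
  have hk : ∀ g m i, k i = (normalize g, m) ↔ Associated g (p i) ∧ e i = m := by
    intro g m i
    rw [Prod.mk.injEq, normalize_eq_normalize_iff_associated, Associated.comm]
  have hτk : ∀ i, τ (k i) = (normalize (p i).reverse, e i) := fun i =>
    Prod.ext (normalize_eq_normalize_iff_associated.2 (normalize_associated (p i)).reverse) rfl
  have hpow0 : ∀ i, (p i ^ e i).coeff 0 ≠ 0 := fun i => by
    rw [coeff_zero_eq_eval_zero, eval_pow, ← coeff_zero_eq_eval_zero]
    exact pow_ne_zero _ (hp0 i)
  refine Finset.pairing_induction k τ (fun i => ?_) Bad (fun i hi => ?_)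
    (Q := fun s => ∃ β, IsAltFormOn (fun i a => AdjoinRoot.root (p i ^ e i) * a) s β)
    ⟨0, ?_⟩ ?_ ?_ Finset.univ (fun j => ?_) (fun j hj => ?_)
  · rw [hτk]
    refine Prod.ext (normalize_eq_normalize_iff_associated.2 ?_) rfl
    have := (normalize_associated (p i).reverse).reverse
    rwa [reverse_reverse_of_coeff_zero_ne_zero (hp0 i)] at this
  · obtain ⟨lam, hlam, hass, -⟩ := hi
    have hass' : Associated (X - C lam) (p i) := hass.trans (normalize_associated _)
    rw [hτk]
    exact Prod.ext (normalize_eq_normalize_iff_associated.2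
      ((hass'.reverse.symm.trans (associated_reverse_X_sub_C hlam)).trans hass')) rfl
  · exact ⟨fun v => rfl, fun v w => rfl, fun v => by simp⟩
  · rintro a s ha hτa hbad ⟨β, hβ⟩
    rw [hτk] at hτa
    obtain ⟨γ, h1, h2, h3⟩ := exists_isAlt_form_adjoinRoot (hp a) (hp0 a)
      (normalize_eq_normalize_iff_associated.1 (congrArg Prod.fst hτa)).symm (e := e a) (by
        intro h
        by_contra hodd
        rw [Nat.not_even_iff_odd] at hodd
        rcases h with h | h
        · exact hbad ⟨1, Or.inl rfl, h.symm.trans (associated_normalize _), hodd⟩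
        · exact hbad ⟨-1, Or.inr rfl, h.symm.trans (associated_normalize _), hodd⟩)
    obtain ⟨δ, hδ⟩ := exists_isAltFormOn_singleton
      (M := fun i => AdjoinRoot (p i ^ e i)) (T := fun i x => AdjoinRoot.root (p i ^ e i) * x)
      h1 h2 h3
    exact ⟨δ + β, hδ.union (Finset.disjoint_singleton_left.2 ha) hβ⟩
  · rintro a b s ha hb hab hkb ⟨β, hβ⟩
    rw [hτk, hk] at hkb
    obtain ⟨hass, heq⟩ := hkb
    have hass' : Associated (p b).reverse (p a) := by
      have := hass.symm.reverse
      rwa [reverse_reverse_of_coeff_zero_ne_zero (hp0 a)] at this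
    obtain ⟨θ, hθ⟩ := exists_algEquiv_root_mul_eq_one (hpow0 a) (hpow0 b)
      (by rw [reverse_pow_of_domain, heq]; exact hass.pow_pow.dvd)
      (by rw [reverse_pow_of_domain, heq]; exact hass'.pow_pow.dvd)
    obtain ⟨φ, hφ⟩ := exists_linearMap_separating (hp a) (e a)
    obtain ⟨δ, hδ⟩ := exists_isAltFormOn_pair
      (M := fun i => AdjoinRoot (p i ^ e i)) (T := fun i x => AdjoinRoot.root (p i ^ e i) * x) hab
      (twistedTracePairing_mul_mul φ θ hθ) (twistedTracePairing_separatingLeft hφ θ)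
      (twistedTracePairing_separatingRight hφ θ)
    refine ⟨δ + β, ?_⟩
    have := hδ.union (t := s) (by simp [ha, hb]) hβ
    rwa [Finset.insert_union, Finset.singleton_union] at this
  · rw [hτk]
    have hkj : k j = (normalize (p j), e j) := rfl
    simp only [hkj, hk]
    convert hcard j
  · obtain ⟨lam, hlam, hass, hodd⟩ := hj
    have hass' : Associated (X - C lam) (p j) := hass.trans (normalize_associated _)
    have hkj : k j = (normalize (X - C lam), e j) :=
      Prod.ext (normalize_eq_normalize_iff_associated.2 hass'.symm) rfl
    simp only [hkj, hk]
    convert heven lam hlam (e j) hodd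

theorem exists_isAlt_invariant_form {F : Type*} [Field F] {V : Type*} [AddCommGroup V]
    [Module F V] [FiniteDimensional F V] (f : Module.End F V) (hf : Function.Injective f)
    (hnull : ∀ g : F[X], Module.finrank F (LinearMap.ker (aeval f g.reverse)) =
      Module.finrank F (LinearMap.ker (aeval f g)))
    (heven : ∀ lam : F, (lam = 1 ∨ lam = -1) → ∀ m : ℕ, 1 ≤ m → Odd m →
      Even (2 * (Module.finrank F (LinearMap.ker (aeval f ((X - C lam) ^ m))) : ℤ)
        - Module.finrank F (LinearMap.ker (aeval f ((X - C lam) ^ (m + 1))))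
        - Module.finrank F (LinearMap.ker (aeval f ((X - C lam) ^ (m - 1)))))) :
    ∃ β : LinearMap.BilinForm F V, β.IsAlt ∧ (∀ v w, β (f v) (f w) = β v w) ∧
      ∀ v, (∀ w, β v w = 0) → v = 0 := by
  classical
  obtain ⟨ι, _, p, e, hp, hp0, he, ψ, hψ⟩ := exists_linearEquiv_pi_adjoinRoot_of_injective f hf
  obtain ⟨β, h1, h2, h3⟩ := exists_isAltFormOn_univ_adjoinRoot (e := e) hp hp0 (fun j => by
    rcases Nat.eq_zero_or_pos (e j) with h0 | hpos
    · rw [he j h0]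
      have hrev := associated_reverse_X_sub_C (F := F) (Or.inl rfl)
      congr 1
      ext i
      rw [Finset.mem_filter, Finset.mem_filter]
      exact and_congr_right fun _ => and_congr_left fun _ => ⟨hrev.trans, hrev.symm.trans⟩
    · have h1 := finrank_ker_aeval_pow_second_difference hp ψ hψ (hp j) hpos
      have h2 := finrank_ker_aeval_pow_second_difference hp ψ hψ
        (irreducible_reverse_of_coeff_zero_ne_zero (hp j) (hp0 j)) hpos
      have hn : ∀ m, Module.finrank F (LinearMap.ker (aeval f ((p j).reverse ^ m))) =
          Module.finrank F (LinearMap.ker (aeval f (p j ^ m))) := fun m => by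
        rw [← reverse_pow_of_domain, hnull]
      rw [hn, hn, hn] at h2
      rw [h1, natDegree_reverse_of_coeff_zero_ne_zero (hp0 j)] at h2
      have hd : ((p j).natDegree : ℤ) ≠ 0 := by exact_mod_cast (hp j).natDegree_pos.ne'
      exact_mod_cast mul_left_cancel₀ hd h2) (fun lam hlam m hm => by
    have := heven lam hlam m hm.pos hm
    rw [finrank_ker_aeval_pow_second_difference hp ψ hψ (irreducible_X_sub_C lam) hm.pos,
      natDegree_X_sub_C, Nat.cast_one, one_mul] at this
    exact_mod_cast this)
  refine ⟨β.compl₁₂ ψ.toLinearMap ψ.toLinearMap, fun v => h1 _, fun v w => ?_, fun v hv => ?_⟩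
  · have h4 := h2 (ψ v) (ψ w)
    have h5 : ∀ u, ψ (f u) = fun i => AdjoinRoot.root (p i ^ e i) * ψ u i := fun u =>
      funext fun i => hψ u i
    rw [← h5, ← h5] at h4
    exact h4
  · have := (h3 (ψ v)).1 fun w => by simpa using hv (ψ.symm w)
    exact ψ.map_eq_zero_iff.1 (funext fun i => this i (Finset.mem_univ i))

namespace Matrix

variable {F : Type*} [Field F] {n : ℕ}

theorem exists_eq_dotProduct_mulVec (β : LinearMap.BilinForm F (Fin n → F)) :
    ∃ S : Matrix (Fin n) (Fin n) F, ∀ v w, β v w = v ⬝ᵥ S *ᵥ w :=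
  ⟨LinearMap.toMatrix₂' F β, fun v w => by
    conv_lhs => rw [← toLinearMap₂'_toMatrix' (R := F) β]
    rw [toLinearMap₂'_apply']⟩

theorem ext_of_dotProduct_mulVec {A B : Matrix (Fin n) (Fin n) F}
    (h : ∀ v w, v ⬝ᵥ A *ᵥ w = v ⬝ᵥ B *ᵥ w) : A = B := by
  refine (toLinearMap₂' F (S₁ := F) (S₂ := F)).injective
    (LinearMap.ext fun v => LinearMap.ext fun w => ?_)
  simpa only [toLinearMap₂'_apply'] using h v w

theorem isUnit_of_separating {S : Matrix (Fin n) (Fin n) F}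
    (h : ∀ v, (∀ w, v ⬝ᵥ S *ᵥ w = 0) → v = 0) : IsUnit S := by
  rw [isUnit_iff_isUnit_det, isUnit_iff_ne_zero]
  intro h0
  obtain ⟨v, hv, hv0⟩ := exists_vecMul_eq_zero_iff.2 h0
  exact hv (h v fun w => by rw [dotProduct_mulVec, hv0, zero_dotProduct])

/-- Every square matrix over a field is similar to its transpose. -/
theorem exists_isUnit_transpose_mul_eq_mul (X : Matrix (Fin n) (Fin n) F) :
    ∃ S : Matrix (Fin n) (Fin n) F, IsUnit S ∧ Xᵀ * S = S * X := by
  classical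
  obtain ⟨ι, _, p, e, hp, ψ, hψ⟩ := exists_linearEquiv_pi_adjoinRoot (toLin' X)
  choose φ hφ using fun i => exists_linearMap_separating (hp i) (e i)
  let β : LinearMap.BilinForm F (Fin n → F) := LinearMap.mk₂ F
    (fun v w => ∑ i, φ i (ψ v i * ψ w i))
    (fun _ _ _ => by simp [add_mul, Finset.sum_add_distrib])
    (fun _ _ _ => by simp [Finset.mul_sum])
    (fun _ _ _ => by simp [mul_add, Finset.sum_add_distrib])
    (fun _ _ _ => by simp [Finset.mul_sum])
  have hβ : ∀ v w, β v w = ∑ i, φ i (ψ v i * ψ w i) := fun _ _ => rfl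
  obtain ⟨S, hS⟩ := exists_eq_dotProduct_mulVec β
  refine ⟨S, isUnit_of_separating fun v hv => ?_, ext_of_dotProduct_mulVec fun v w => ?_⟩
  · refine ψ.map_eq_zero_iff.1 (funext fun i => hφ i _ fun b => ?_)
    have h := hv (ψ.symm (Pi.single i b))
    rw [← hS, hβ, Finset.sum_eq_single i] at h
    · simpa using h
    · intro j _ hj
      simp [hj]
    · simp
  · rw [← mulVec_mulVec, ← mulVec_mulVec, dotProduct_mulVec, vecMul_transpose, ← hS, ← hS, hβ, hβ]
    refine Finset.sum_congr rfl fun i _ => ?_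
    rw [← toLin'_apply, ← toLin'_apply, hψ, hψ, mul_left_comm, mul_assoc]

theorem dotProduct_mulVec_self_eq_zero {B : Matrix (Fin n) (Fin n) F} (hB : Bᵀ = -B)
    (hB0 : ∀ i, B i i = 0) (v : Fin n → F) : v ⬝ᵥ B *ᵥ v = 0 := by
  simp only [dotProduct, mulVec, Finset.mul_sum]
  rw [← Finset.sum_product']
  refine Finset.sum_involution (fun x _ => x.swap) (fun x _ => ?_) (fun x _ hx h => ?_)
    (fun _ _ => Finset.mem_univ _) (fun _ _ => Prod.swap_swap _)
  · have := congrFun (congrFun hB x.1) x.2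
    rw [transpose_apply, neg_apply] at this
    simp only [Prod.fst_swap, Prod.snd_swap, this]
    ring
  · have h1 : x.2 = x.1 := congrArg Prod.fst h
    rw [h1, hB0] at hx
    simp at hx

theorem transpose_eq_neg_of_dotProduct_mulVec_self {B : Matrix (Fin n) (Fin n) F}
    (h : ∀ v, v ⬝ᵥ B *ᵥ v = 0) : Bᵀ = -B ∧ ∀ i, B i i = 0 := by
  refine ⟨ext_of_dotProduct_mulVec fun v w => ?_, fun i => ?_⟩
  · have := h (v + w)
    rw [mulVec_add, dotProduct_add, add_dotProduct, add_dotProduct, h, h, zero_add,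
      add_zero] at this
    rw [neg_mulVec, dotProduct_neg, mulVec_transpose, dotProduct_comm, ← dotProduct_mulVec]
    exact eq_neg_of_add_eq_zero_left this
  · simpa using h (Pi.single i 1)

theorem rank_add_finrank_ker (A : Matrix (Fin n) (Fin n) F) :
    A.rank + Module.finrank F (LinearMap.ker (toLin' A)) = n := by
  have := (toLin' A).finrank_range_add_finrank_ker
  rwa [Module.finrank_fin_fun] at this

theorem finrank_ker_mul_mul_of_isUnit {U V : Matrix (Fin n) (Fin n) F} (hU : IsUnit U)
    (hV : IsUnit V) (A : Matrix (Fin n) (Fin n) F) :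
    Module.finrank F (LinearMap.ker (toLin' (U * A * V))) =
      Module.finrank F (LinearMap.ker (toLin' A)) := by
  have h1 := rank_add_finrank_ker (U * A * V)
  have h2 := rank_add_finrank_ker A
  rw [rank_mul_eq_left_of_isUnit_det _ _ ((isUnit_iff_isUnit_det _).1 hV),
    rank_mul_eq_right_of_isUnit_det _ _ ((isUnit_iff_isUnit_det _).1 hU)] at h1
  omega

theorem even_add_finrank_ker_of_dotProduct_mulVec_self {B : Matrix (Fin n) (Fin n) F}
    (h : ∀ v, v ⬝ᵥ B *ᵥ v = 0) :
    Even (n + Module.finrank F (LinearMap.ker (toLin' B))) := by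
  have h1 := LinearMap.BilinForm.IsAlt.even_finrank_add_finrank_ker
    (LinearMap.flip (toLinearMap₂' F B)) fun v => by
      rw [LinearMap.flip_apply, toLinearMap₂'_apply', h]
  rw [Module.finrank_fin_fun] at h1
  suffices LinearMap.ker (toLin' B) = LinearMap.ker (LinearMap.flip (toLinearMap₂' F B)) by
    rwa [this]
  ext w
  rw [LinearMap.mem_ker, LinearMap.mem_ker, toLin'_apply, LinearMap.ext_iff]
  simp only [LinearMap.flip_apply, toLinearMap₂'_apply', LinearMap.zero_apply]
  exact ⟨fun h v => by rw [h, dotProduct_zero], fun h => dotProduct_eq_zero _ fun v => by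
    rw [dotProduct_comm, h]⟩

/-- The even powers of `X - λ` have nullity congruent to `n` modulo `2` if `X` preserves a
nondegenerate alternating form and `λ = ± 1`. -/
theorem even_add_finrank_ker_sub_smul_one_pow {X B : Matrix (Fin n) (Fin n) F} (hX : IsUnit X)
    (hB : IsUnit B) (halt : ∀ v, v ⬝ᵥ B *ᵥ v = 0) (hXB : X * B * Xᵀ = B) {lam : F}
    (hlam : lam * lam = 1) (k : ℕ) :
    Even (n + Module.finrank F (LinearMap.ker (toLin' ((X - lam • 1) ^ (k + k))))) := by
  have hXX : X⁻¹ * X = 1 := nonsing_inv_mul _ ((isUnit_iff_isUnit_det _).1 hX)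
  have hXX' : X * X⁻¹ = 1 := mul_nonsing_inv _ ((isUnit_iff_isUnit_det _).1 hX)
  set N := X - lam • (1 : Matrix (Fin n) (Fin n) F) with hN
  set U := -(lam • X⁻¹) with hU
  have hUu : IsUnit U := by
    refine IsUnit.of_mul_eq_one (-(lam • X)) ?_
    rw [hU, neg_mul_neg, smul_mul_smul_comm, hlam, hXX, one_smul]
  have hUN : U * N = X⁻¹ - lam • 1 := by
    rw [hU, hN, mul_sub, neg_mul, smul_mul_assoc, hXX, mul_smul_comm, mul_one, smul_neg, smul_smul,
      hlam, one_smul]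
    abel
  have hNU : N * U = X⁻¹ - lam • 1 := by
    rw [hU, hN, sub_mul, mul_neg, mul_smul_comm, hXX', smul_mul_assoc, one_mul, smul_neg, smul_smul,
      hlam, one_smul]
    abel
  have hBX : B * Xᵀ = X⁻¹ * B := by
    conv_rhs => rw [← hXB, mul_assoc, ← mul_assoc, hXX, one_mul]
  have hsemi : SemiconjBy B Nᵀ (U * N) := by
    rw [SemiconjBy, hUN, hN, transpose_sub, transpose_smul, transpose_one, mul_sub, sub_mul, hBX]
    simp
  have hcomm : Commute U N := hUN.trans hNU.symm
  have key : N ^ k * B * (N ^ k)ᵀ = U ^ k * N ^ (k + k) * B := by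
    rw [transpose_pow, mul_assoc, (hsemi.pow_right k).eq, hcomm.mul_pow, ← mul_assoc, ← mul_assoc,
      ← ((hcomm.pow_pow k k).eq), mul_assoc (U ^ k), ← pow_add]
  rw [← finrank_ker_mul_mul_of_isUnit (hUu.pow k) hB, ← key]
  refine even_add_finrank_ker_of_dotProduct_mulVec_self fun v => ?_
  rw [← mulVec_mulVec, ← mulVec_mulVec, dotProduct_mulVec, ← mulVec_transpose, halt]

theorem even_edMultiplicity {X B : Matrix (Fin n) (Fin n) F} (hX : IsUnit X)
    (hB : IsUnit B) (halt : ∀ v, v ⬝ᵥ B *ᵥ v = 0) (hXB : X * B * Xᵀ = B) {lam : F}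
    (hlam : lam = 1 ∨ lam = -1) {m : ℕ} (hm : Odd m) : Even (edMultiplicity X lam m) := by
  have hlam' : lam * lam = 1 := by rcases hlam with rfl | rfl <;> simp
  obtain ⟨k, rfl⟩ := hm
  have h1 := even_add_finrank_ker_sub_smul_one_pow hX hB halt hXB hlam' (k + 1)
  have h2 := even_add_finrank_ker_sub_smul_one_pow hX hB halt hXB hlam' k
  rw [edMultiplicity, show 2 * k + 1 + 1 = k + 1 + (k + 1) by ring,
    show 2 * k + 1 - 1 = k + k by omega]
  rw [Nat.even_iff] at h1 h2
  rw [Int.even_iff]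
  omega

theorem aeval_reverse_mul_pow {A : Type*} [Ring A] [Algebra F A] {x y : A} (h : y * x = 1)
    (g : F[X]) : aeval y g.reverse * x ^ g.natDegree = aeval x g := by
  have hyx : ∀ i, y ^ i * x ^ i = 1 := fun i => by
    induction i with
    | zero => simp
    | succ i ih => rw [pow_succ, pow_succ', mul_assoc, ← mul_assoc y, h, one_mul, ih]
  rw [aeval_eq_sum_range' (Nat.lt_succ_of_le (reverse_natDegree_le g)), aeval_eq_sum_range,
    Finset.sum_mul, ← Finset.sum_range_reflect]
  refine Finset.sum_congr rfl fun i hi => ?_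
  have hi' : i ≤ g.natDegree := Nat.lt_succ_iff.1 (Finset.mem_range.1 hi)
  rw [coeff_reverse, revAt_le (by omega), smul_mul_assoc,
    show g.natDegree - (g.natDegree + 1 - 1 - i) = i by omega]
  congr 1
  conv_lhs => rw [← Nat.sub_add_cancel hi', pow_add, ← mul_assoc]
  rw [show g.natDegree - i + i + 1 - 1 - i = g.natDegree - i by omega, hyx, one_mul]

theorem mul_aeval_of_semiconjBy {A : Type*} [Ring A] [Algebra F A] {a x y : A}
    (h : SemiconjBy a x y) (g : F[X]) : a * aeval x g = aeval y g * a := by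
  rw [aeval_eq_sum_range, aeval_eq_sum_range, Finset.mul_sum, Finset.sum_mul]
  refine Finset.sum_congr rfl fun i _ => ?_
  rw [mul_smul_comm, smul_mul_assoc, (h.pow_right i).eq]

theorem aeval_toLin' (X : Matrix (Fin n) (Fin n) F) (g : F[X]) :
    aeval (toLin' X) g = toLin' (aeval X g) :=
  aeval_algHom_apply (toLinAlgEquiv' : Matrix (Fin n) (Fin n) F ≃ₐ[F] _) X g

theorem finrank_ker_aeval_reverse {X P : Matrix (Fin n) (Fin n) F} (hX : IsUnit X)
    (hP : IsUnit P) (hXP : X⁻¹ = P⁻¹ * X * P) (g : F[X]) :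
    Module.finrank F (LinearMap.ker (aeval (toLin' X) g.reverse)) =
      Module.finrank F (LinearMap.ker (aeval (toLin' X) g)) := by
  have hXX : X⁻¹ * X = 1 := nonsing_inv_mul _ ((isUnit_iff_isUnit_det _).1 hX)
  have hPP : P * P⁻¹ = 1 := mul_nonsing_inv _ ((isUnit_iff_isUnit_det _).1 hP)
  have h1 : SemiconjBy P X⁻¹ X := by
    rw [SemiconjBy, hXP, mul_assoc P⁻¹, ← mul_assoc P, hPP, one_mul]
  have h2 := mul_aeval_of_semiconjBy h1 g.reverse
  have h3 : 1 * aeval X g.reverse * (P * X ^ g.natDegree) = P * aeval X g * 1 := by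
    rw [one_mul, mul_one, ← mul_assoc, ← h2, mul_assoc, aeval_reverse_mul_pow hXX]
  rw [aeval_toLin', aeval_toLin',
    ← finrank_ker_mul_mul_of_isUnit isUnit_one (hP.mul (hX.pow _)), h3,
    finrank_ker_mul_mul_of_isUnit hP isUnit_one]

theorem edMultiplicity_eq (X : Matrix (Fin n) (Fin n) F) (lam : F) (m : ℕ) :
    edMultiplicity X lam m =
      2 * (Module.finrank F (LinearMap.ker (aeval (toLin' X) ((Polynomial.X - C lam) ^ m))) : ℤ)
        - Module.finrank F (LinearMap.ker (aeval (toLin' X) ((Polynomial.X - C lam) ^ (m + 1))))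
        - Module.finrank F
          (LinearMap.ker (aeval (toLin' X) ((Polynomial.X - C lam) ^ (m - 1)))) := by
  have h : ∀ k, aeval (toLin' X) ((Polynomial.X - C lam) ^ k) = toLin' ((X - lam • 1) ^ k) :=
    fun k => by
      rw [aeval_toLin', map_pow, map_sub, aeval_X, aeval_C, Algebra.algebraMap_eq_smul_one]
  rw [h, h, h, edMultiplicity]

theorem exists_alternating_of_similar_inv {X P : Matrix (Fin n) (Fin n) F} (hX : IsUnit X)
    (hP : IsUnit P) (hXP : X⁻¹ = P⁻¹ * X * P)
    (heven : ∀ lam : F, (lam = 1 ∨ lam = -1) → ∀ m : ℕ, 1 ≤ m → Odd m →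
      Even (edMultiplicity X lam m)) :
    ∃ B : Matrix (Fin n) (Fin n) F, IsUnit B ∧ (∀ v, v ⬝ᵥ B *ᵥ v = 0) ∧ X * B * Xᵀ = B := by
  obtain ⟨β, h1, h2, h3⟩ := exists_isAlt_invariant_form (toLin' X)
    (mulVec_injective_iff_isUnit.2 hX) (finrank_ker_aeval_reverse hX hP hXP)
    fun lam hlam m hm hodd => by
      rw [← edMultiplicity_eq]
      exact heven lam hlam m hm hodd
  obtain ⟨S, hS⟩ := exists_eq_dotProduct_mulVec β
  have hSu : IsUnit S := isUnit_of_separating fun v hv => h3 v fun w => by rw [hS, hv]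
  have hSdet := (isUnit_iff_isUnit_det _).1 hSu
  have hXdet := (isUnit_iff_isUnit_det _).1 hX
  have hXS : Xᵀ * S * X = S := ext_of_dotProduct_mulVec fun v w => by
    rw [← hS v w, ← h2, hS, ← mulVec_mulVec, ← mulVec_mulVec, dotProduct_mulVec v Xᵀ,
      vecMul_transpose, toLin'_apply, toLin'_apply]
  refine ⟨S⁻¹, (isUnit_nonsing_inv_iff).2 hSu, fun v => ?_, ?_⟩
  · obtain ⟨w, rfl⟩ : ∃ w, v = S *ᵥ w := ⟨S⁻¹ *ᵥ v, by
      rw [mulVec_mulVec, mul_nonsing_inv _ hSdet, one_mulVec]⟩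
    rw [mulVec_mulVec, nonsing_inv_mul _ hSdet, one_mulVec, dotProduct_comm, ← hS, h1]
  · conv_lhs => rw [← hXS]
    rw [mul_inv_rev, mul_inv_rev, ← mul_assoc X, mul_nonsing_inv _ hXdet, one_mul, mul_assoc,
      nonsing_inv_mul _ (by rwa [det_transpose]), mul_one]

end Matrix

end

/-- Let `F` be a finite field and `X ∈ GL(n,F)`.  There exists an invertible alternating
matrix `B` with `X·B·Xᵀ = B` iff `X` is similar to `X⁻¹` and for every `λ ∈ {1,−1}` and
every odd `m ≥ 1` the multiplicity of `(t−λ)^m` as an elementary divisor of `X` is even. -/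
theorem exists_alternating_form_iff
    {F : Type*} [Field F] [Fintype F] {n : ℕ}
    (X : Matrix (Fin n) (Fin n) F) (hX : IsUnit X) :
    (∃ B : Matrix (Fin n) (Fin n) F, IsUnit B ∧ Bᵀ = -B ∧ (∀ i, B i i = 0) ∧
        X * B * Xᵀ = B) ↔
      ((∃ P : Matrix (Fin n) (Fin n) F, IsUnit P ∧ X⁻¹ = P⁻¹ * X * P) ∧
        ∀ lam : F, (lam = 1 ∨ lam = -1) → ∀ m : ℕ, 1 ≤ m → Odd m →
          Even (edMultiplicity X lam m)) := by
  constructor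
  · rintro ⟨B, hB, hBt, hB0, hXB⟩
    refine ⟨?_, fun lam hlam m _ hm => Matrix.even_edMultiplicity hX hB
      (Matrix.dotProduct_mulVec_self_eq_zero hBt hB0) hXB hlam hm⟩
    obtain ⟨S, hS, hXS⟩ := Matrix.exists_isUnit_transpose_mul_eq_mul X
    have hBS : IsUnit (B * S).det := (Matrix.isUnit_iff_isUnit_det _).1 (hB.mul hS)
    refine ⟨(B * S)⁻¹, Matrix.isUnit_nonsing_inv_iff.2 (hB.mul hS), Matrix.inv_eq_right_inv ?_⟩
    rw [Matrix.nonsing_inv_nonsing_inv _ hBS, mul_assoc B, ← hXS, ← mul_assoc B, ← mul_assoc X,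
      ← mul_assoc X, ← mul_assoc X, hXB, Matrix.mul_nonsing_inv _ hBS]
  · rintro ⟨⟨P, hP, hXP⟩, heven⟩
    obtain ⟨B, hB, halt, hXB⟩ := Matrix.exists_alternating_of_similar_inv hX hP hXP heven
    obtain ⟨h1, h2⟩ := Matrix.transpose_eq_neg_of_dotProduct_mulVec_self halt
    exact ⟨B, hB, h1, h2, hXB⟩
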